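/- arXiv:2209.06477 — 3 statements merged into one kernel-verified Lean document; each statement's English description precedes it below -/
import Mathlib

section
/- Let 𝔥 and ℋ be complex Hilbert spaces, 𝔖 and 𝔰 bounded self-adjoint operators on ℋ, g ∈ 𝔥, and (V_τ)_{τ∈ℝ} a strongly continuous one-parameter group of unitary operators on 𝔥. For z ∈ 𝔥 set α_τ(z) = 2 Re⟨z, V_τ g⟩ and let 𝔘_{t,s}(z) be the propagator generated by τ ↦ 𝔖 + α_τ(z)𝔰. Then for every t ∈ ℝ and all z, z′ ∈ 𝔥, ‖𝔘_{t,0}(z) − 𝔘_{t,0}(z′)‖ ≤ 2‖g‖‖𝔰‖ |t| e^{(‖𝔖‖ + 2‖g‖‖𝔰‖‖z′‖)|t|} ‖z − z′‖; in particular, for each fixed t the map z ↦ 𝔘_{t,0}(z) is continuous from 𝔥 to B(ℋ) in operator norm. -/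
noncomputable section
open MeasureTheory Complex
open scoped InnerProductSpace

/-- `U` is a norm-continuous (in the first time variable) solution of the Duhamel integral
equation `U t s = 1 - i ∫_s^t H τ * U τ s dτ` (Bochner integral in `B(ℋ)`). -/
def IsPropagator {ℋ : Type*} [NormedAddCommGroup ℋ] [InnerProductSpace ℂ ℋ] [CompleteSpace ℋ]
    (H : ℝ → (ℋ →L[ℂ] ℋ)) (U : ℝ → ℝ → (ℋ →L[ℂ] ℋ)) : Prop :=
  (∀ s : ℝ, Continuous fun t => U t s) ∧
  ∀ s t : ℝ, U t s = 1 - Complex.I • ∫ τ in s..t, (H τ) * (U τ s)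

lemma aux_gron_pos {E : Type*} [NormedAddCommGroup E] [NormedSpace ℝ E] {D D' : ℝ → E} {K ε : ℝ}
    (hK : 0 ≤ K) (hε : 0 ≤ ε) (h0 : D 0 = 0) (hD : ∀ t, HasDerivAt D (D' t) t)
    (hb : ∀ t, ‖D' t‖ ≤ K * ‖D t‖ + ε) (t : ℝ) (ht : 0 ≤ t) :
    ‖D t‖ ≤ ε * t * Real.exp (K * t) := by
  have h := norm_le_gronwallBound_of_norm_deriv_right_le (f := D) (f' := D') (δ := 0) (K := K)
    (ε := ε) (a := 0) (b := t) (fun x _ => (hD x).continuousAt.continuousWithinAt)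
    (fun x _ => (hD x).hasDerivWithinAt) (by simp [h0]) (fun x _ => hb x) t ⟨ht, le_rfl⟩
  refine h.trans ?_
  rcases hK.eq_or_lt with rfl | hK
  · simp [gronwallBound_K0]
  · rw [gronwallBound_of_K_ne_0 hK.ne', sub_zero]
    have h1 : Real.exp (K * t) - 1 ≤ (K * t) * Real.exp (K * t) := by
      have h2 := mul_le_mul_of_nonneg_right (Real.add_one_le_exp (-(K * t)))
        (Real.exp_pos (K * t)).le
      rw [← Real.exp_add] at h2
      simp only [neg_add_cancel, Real.exp_zero] at h2
      linarith
    have h3 := mul_le_mul_of_nonneg_left h1 (div_nonneg hε hK.le)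
    have h4 : ε / K * ((K * t) * Real.exp (K * t)) = ε * t * Real.exp (K * t) := by
      field_simp
    linarith

lemma aux_gron {E : Type*} [NormedAddCommGroup E] [NormedSpace ℝ E] {D D' : ℝ → E} {K ε : ℝ}
    (hK : 0 ≤ K) (hε : 0 ≤ ε) (h0 : D 0 = 0) (hD : ∀ t, HasDerivAt D (D' t) t)
    (hb : ∀ t, ‖D' t‖ ≤ K * ‖D t‖ + ε) (t : ℝ) :
    ‖D t‖ ≤ ε * |t| * Real.exp (K * |t|) := by
  rcases le_total 0 t with ht | ht
  · rw [abs_of_nonneg ht]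
    exact aux_gron_pos hK hε h0 hD hb t ht
  · rw [abs_of_nonpos ht]
    have := aux_gron_pos (D := fun s => D (-s)) (D' := fun s => - D' (-s)) hK hε (by simpa using h0)
      (fun s => by simpa [Function.comp_def] using (hD (-s)).scomp s (hasDerivAt_neg s))
      (fun s => by simpa using hb (-s)) (-t) (by linarith)
    simpa using this

lemma aux_deriv {ℋ : Type*} [NormedAddCommGroup ℋ] [InnerProductSpace ℂ ℋ] [CompleteSpace ℋ]
    {H : ℝ → (ℋ →L[ℂ] ℋ)} {U : ℝ → ℝ → (ℋ →L[ℂ] ℋ)} (hH : Continuous H)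
    (hU : IsPropagator H U) (t : ℝ) :
    HasDerivAt (fun t => U t 0) (-(Complex.I • (H t * U t 0))) t := by
  have hc : Continuous fun τ => H τ * U τ 0 := hH.mul (hU.1 0)
  have h1 : HasDerivAt (fun t => ∫ τ in (0:ℝ)..t, H τ * U τ 0) (H t * U t 0) t :=
    intervalIntegral.integral_hasDerivAt_right (hc.intervalIntegrable _ _)
      hc.stronglyMeasurable.stronglyMeasurableAtFilter hc.continuousAt
  have h2 := (h1.const_smul Complex.I).const_sub (1 : ℋ →L[ℂ] ℋ)
  refine h2.congr_of_eventuallyEq (Filter.Eventually.of_forall fun s => ?_)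
  exact hU.2 0 s

lemma aux_norm {ℋ : Type*} [NormedAddCommGroup ℋ] [InnerProductSpace ℂ ℋ] [CompleteSpace ℋ]
    {H : ℝ → (ℋ →L[ℂ] ℋ)} {U : ℝ → ℝ → (ℋ →L[ℂ] ℋ)} (hH : Continuous H)
    (hs : ∀ t, IsSelfAdjoint (H t))
    (hU : IsPropagator H U) (t : ℝ) : ‖U t 0‖ ≤ 1 := by
  have hd : ∀ t, HasDerivAt (fun t => star (U t 0) * U t 0) 0 t := by
    intro t
    have h := aux_deriv hH hU t
    have h2 := h.star.mul h
    have e : star (-(I • (H t * U t 0))) * U t 0 + star (U t 0) * -(I • (H t * U t 0)) = 0 := by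
      rw [star_neg, star_smul, star_mul, (hs t).star_eq]
      simp [mul_assoc]
    rw [e] at h2
    exact h2
  have h0 : U 0 0 = 1 := by rw [hU.2 0 0]; simp
  have hc := is_const_of_deriv_eq_zero (fun t => (hd t).differentiableAt)
    (fun t => (hd t).deriv) t 0
  simp only [h0, star_one, mul_one] at hc
  have h3 := CStarRing.norm_star_mul_self (x := U t 0)
  rw [hc] at h3
  have h4 : ‖(1 : ℋ →L[ℂ] ℋ)‖ ≤ 1 := ContinuousLinearMap.norm_id_le
  nlinarith [norm_nonneg (U t 0)]

/-- Norm-Lipschitz dependence of the effective spin propagator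
`𝔘_{t,0}(z)`, generated by `τ ↦ 𝔖 + 2Re⟨z, V_τ g⟩ 𝔰`, on the classical field configuration
`z`, with the explicit Lipschitz bound, and in particular continuity in `z`. -/
theorem effective_propagator_lipschitz_in_field
    {𝔥 : Type*} [NormedAddCommGroup 𝔥] [InnerProductSpace ℂ 𝔥] [CompleteSpace 𝔥]
    {ℋ : Type*} [NormedAddCommGroup ℋ] [InnerProductSpace ℂ ℋ] [CompleteSpace ℋ]
    (𝔖 𝔰 : ℋ →L[ℂ] ℋ) (h𝔖 : IsSelfAdjoint 𝔖) (h𝔰 : IsSelfAdjoint 𝔰) (g : 𝔥)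
    (V : ℝ → (𝔥 →L[ℂ] 𝔥))
    (hVunit : ∀ τ : ℝ, V τ ∈ unitary (𝔥 →L[ℂ] 𝔥))
    (hV0 : V 0 = 1) (hVgrp : ∀ σ τ : ℝ, V (σ + τ) = V σ * V τ)
    (hVcont : ∀ x : 𝔥, Continuous fun τ => V τ x)
    (U : 𝔥 → ℝ → ℝ → (ℋ →L[ℂ] ℋ))
    (hU : ∀ z : 𝔥,
      IsPropagator (fun τ => 𝔖 + (2 * (⟪z, V τ g⟫_ℂ).re) • 𝔰) (U z)) :
    (∀ (t : ℝ) (z z' : 𝔥),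
      ‖U z t 0 - U z' t 0‖ ≤
        2 * ‖g‖ * ‖𝔰‖ * |t| *
          Real.exp ((‖𝔖‖ + 2 * ‖g‖ * ‖𝔰‖ * ‖z'‖) * |t|) * ‖z - z'‖) ∧
    ∀ t : ℝ, Continuous fun z : 𝔥 => U z t 0 := by
  have hb : ∀ τ (w : 𝔥), |2 * (⟪w, V τ g⟫_ℂ).re| ≤ 2 * (‖w‖ * ‖g‖) := by
    intro τ w
    have h1 : ‖V τ g‖ = ‖g‖ := by
      exact ContinuousLinearMap.norm_map_of_mem_unitary (hVunit τ) g
    rw [abs_mul, abs_two, ← h1]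
    gcongr
    exact (Complex.abs_re_le_norm _).trans (norm_inner_le_norm _ _)
  have hHc : ∀ z : 𝔥, Continuous (fun τ => 𝔖 + (2 * (⟪z, V τ g⟫_ℂ).re) • 𝔰) := by
    intro z
    have h1 : Continuous fun τ => ⟪z, V τ g⟫_ℂ := continuous_const.inner (hVcont g)
    exact continuous_const.add ((continuous_const.mul
      (Complex.continuous_re.comp h1)).smul continuous_const)
  have hHs : ∀ (z : 𝔥) (τ : ℝ), IsSelfAdjoint (𝔖 + (2 * (⟪z, V τ g⟫_ℂ).re) • 𝔰) := by
    intro z τ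
    exact h𝔖.add (IsSelfAdjoint.smul (IsSelfAdjoint.all _) h𝔰)
  have main : ∀ (t : ℝ) (z z' : 𝔥),
      ‖U z t 0 - U z' t 0‖ ≤
        2 * ‖g‖ * ‖𝔰‖ * |t| *
          Real.exp ((‖𝔖‖ + 2 * ‖g‖ * ‖𝔰‖ * ‖z'‖) * |t|) * ‖z - z'‖ := by
    intro t z z'
    have h := aux_gron (D := fun t => U z t 0 - U z' t 0)
      (K := ‖𝔖‖ + 2 * ‖g‖ * ‖𝔰‖ * ‖z'‖) (ε := 2 * ‖g‖ * ‖𝔰‖ * ‖z - z'‖)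
      (by positivity) (by positivity)
      (by beta_reduce; rw [(hU z).2 0 0, (hU z').2 0 0]; simp)
      (fun t => (aux_deriv (hHc z) (hU z) t).sub (aux_deriv (hHc z') (hU z') t))
      (fun t => by
        have hn := aux_norm (hHc z) (hHs z) (hU z) t
        have e : -(Complex.I • ((𝔖 + (2 * (⟪z, V t g⟫_ℂ).re) • 𝔰) * U z t 0)) -
            -(Complex.I • ((𝔖 + (2 * (⟪z', V t g⟫_ℂ).re) • 𝔰) * U z' t 0)) =
            -(Complex.I • ((𝔖 + (2 * (⟪z', V t g⟫_ℂ).re) • 𝔰) * (U z t 0 - U z' t 0) +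
              ((2 * (⟪z - z', V t g⟫_ℂ).re) • 𝔰) * U z t 0)) := by
          rw [inner_sub_left, Complex.sub_re, mul_sub (2 : ℝ), sub_smul, neg_sub_neg, ← smul_sub,
            ← smul_neg]
          congr 1
          generalize (2 * (⟪z, V t g⟫_ℂ).re) • 𝔰 = a
          generalize (2 * (⟪z', V t g⟫_ℂ).re) • 𝔰 = b
          noncomm_ring
        rw [e, norm_neg, norm_smul, Complex.norm_I, one_mul]
        refine (norm_add_le _ _).trans (add_le_add ?_ ?_)
        · refine (norm_mul_le _ _).trans ?_
          gcongr
          refine (norm_add_le _ _).trans ?_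
          gcongr
          rw [norm_smul, Real.norm_eq_abs]
          refine (mul_le_mul_of_nonneg_right (hb t z') (norm_nonneg _)).trans (le_of_eq ?_)
          ring
        · refine (norm_mul_le _ _).trans ?_
          rw [norm_smul, Real.norm_eq_abs]
          refine (mul_le_of_le_one_right (by positivity) hn).trans ?_
          refine (mul_le_mul_of_nonneg_right (hb t (z - z')) (norm_nonneg _)).trans (le_of_eq ?_)
          ring) t
    refine h.trans (le_of_eq ?_)
    ring
  refine ⟨main, fun t => continuous_iff_continuousAt.2 fun z' => ?_⟩
  rw [ContinuousAt, tendsto_iff_norm_sub_tendsto_zero]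
  refine squeeze_zero (fun _ => norm_nonneg _) (fun z => main t z z') ?_
  have hc : Continuous fun z : 𝔥 => 2 * ‖g‖ * ‖𝔰‖ * |t| *
          Real.exp ((‖𝔖‖ + 2 * ‖g‖ * ‖𝔰‖ * ‖z'‖) * |t|) * ‖z - z'‖ :=
    continuous_const.mul (continuous_id.sub continuous_const).norm
  simpa using hc.tendsto z'
end
end

section
/- Let 𝔪 = (μ, γ) be a state-valued measure on separable complex Hilbert spaces 𝔥, ℋ, with Fourier transform 𝔪̂(η) = ∫_𝔥 e^{2i Re⟨η,z⟩} γ(z) dμ(z). Then 𝔪̂ is completely positive definite: for every finite collection η_1, …, η_J ∈ 𝔥 and 𝔱_1, …, 𝔱_J ∈ B(ℋ), the operator Σ_{j,k=1}^J 𝔱_j 𝔪̂(η_j − η_k) 𝔱_k* is a positive (nonnegative) operator on ℋ. -/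
noncomputable section
open MeasureTheory Complex
open scoped InnerProductSpace

variable {ℋ : Type*} [NormedAddCommGroup ℋ] [InnerProductSpace ℂ ℋ] [CompleteSpace ℋ]

/-- The trace norm `‖T‖₁ = tr √(T*T)` computed in the Hilbert basis `e`. -/
def traceNorm {ι : Type*} (e : HilbertBasis ι ℂ ℋ) (T : ℋ →L[ℂ] ℋ) : ℝ :=
  ∑' i, (⟪e i, (CFC.sqrt (star T * T)) (e i)⟫_ℂ).re

/-- `T` is trace class: `tr √(T*T) < ∞`. -/
def IsTraceClass {ι : Type*} (e : HilbertBasis ι ℂ ℋ) (T : ℋ →L[ℂ] ℋ) : Prop :=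
  Summable fun i => (⟪e i, (CFC.sqrt (star T * T)) (e i)⟫_ℂ).re

/-- A state-valued measure: a finite Borel measure `μ` on `𝔥` together with a trace-norm
Bochner integrable map `γ` whose values are `μ`-a.e. positive trace-one operators on `ℋ`. -/
def IsStateValuedMeasure {𝔥 : Type*} [NormedAddCommGroup 𝔥] [InnerProductSpace ℂ 𝔥]
    [MeasurableSpace 𝔥] {ι : Type*} (e : HilbertBasis ι ℂ ℋ)
    (μ : Measure 𝔥) (γ : 𝔥 → (ℋ →L[ℂ] ℋ)) : Prop :=
  IsFiniteMeasure μ ∧ Integrable γ μ ∧ Integrable (fun z => traceNorm e (γ z)) μ ∧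
  (∀ᵐ z ∂μ, (γ z).IsPositive) ∧
  (∀ᵐ z ∂μ, HasSum (fun i => (⟪e i, γ z (e i)⟫_ℂ).re) 1)

/-- The Fourier transform `𝔪̂(η) = ∫ e^{2i Re⟨η,z⟩} γ(z) dμ(z)` of a state-valued measure. -/
def svmFourier {𝔥 : Type*} [NormedAddCommGroup 𝔥] [InnerProductSpace ℂ 𝔥]
    [MeasurableSpace 𝔥] (μ : Measure 𝔥) (γ : 𝔥 → (ℋ →L[ℂ] ℋ)) (η : 𝔥) : ℋ →L[ℂ] ℋ :=
  ∫ z, Complex.exp (2 * Complex.I * ((⟪η, z⟫_ℂ).re : ℂ)) • γ z ∂μ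

/-- The Fourier transform of a state-valued measure is completely positive
definite: for all `η₁,…,η_J ∈ 𝔥` and `𝔱₁,…,𝔱_J ∈ B(ℋ)`, the operator
`Σ_{j,k} 𝔱_j 𝔪̂(η_j - η_k) 𝔱_k*` is positive. -/
theorem svmFourier_completely_positive_definite
    {𝔥 : Type*} [NormedAddCommGroup 𝔥] [InnerProductSpace ℂ 𝔥] [CompleteSpace 𝔥]
    [MeasurableSpace 𝔥] [BorelSpace 𝔥] [SecondCountableTopology 𝔥]
    [SecondCountableTopology ℋ]
    {ι : Type*} (e : HilbertBasis ι ℂ ℋ)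
    (μ : Measure 𝔥) (γ : 𝔥 → (ℋ →L[ℂ] ℋ))
    (hsvm : IsStateValuedMeasure e μ γ) :
    ∀ (J : ℕ) (η : Fin J → 𝔥) (𝔱 : Fin J → (ℋ →L[ℂ] ℋ)),
      (∑ j : Fin J, ∑ k : Fin J,
        𝔱 j * svmFourier μ γ (η j - η k) * star (𝔱 k)).IsPositive := by
  intro J η 𝔱
  obtain ⟨_, hγ, -, hpos, -⟩ := hsvm
  have hint : ∀ ξ : 𝔥, Integrable
      (fun z => Complex.exp (2 * Complex.I * ((⟪ξ, z⟫_ℂ).re : ℂ)) • γ z) μ := by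
    intro ξ
    refine Integrable.bdd_smul (𝕜 := ℂ) hγ 1 ?_ ?_
    · exact (by fun_prop : Continuous fun z : 𝔥 =>
        Complex.exp (2 * Complex.I * ((⟪ξ, z⟫_ℂ).re : ℂ))).aestronglyMeasurable
    · refine Filter.Eventually.of_forall fun z => ?_
      rw [Complex.norm_exp]
      simp
  let Φ : Fin J → Fin J → (ℋ →L[ℂ] ℋ) →L[ℂ] (ℋ →L[ℂ] ℋ) := fun j k =>
    ((ContinuousLinearMap.mul ℂ (ℋ →L[ℂ] ℋ)).flip (star (𝔱 k))).comp
      (ContinuousLinearMap.mul ℂ (ℋ →L[ℂ] ℋ) (𝔱 j))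
  have hΦ : ∀ j k T, Φ j k T = 𝔱 j * T * star (𝔱 k) := fun j k T => rfl
  have hI : ∀ j k, Integrable (fun z => Φ j k
      (Complex.exp (2 * Complex.I * ((⟪η j - η k, z⟫_ℂ).re : ℂ)) • γ z)) μ :=
    fun j k => (Φ j k).integrable_comp (hint _)
  have key : (∑ j : Fin J, ∑ k : Fin J, 𝔱 j * svmFourier μ γ (η j - η k) * star (𝔱 k)) =
      ∫ z, ∑ j : Fin J, ∑ k : Fin J, Φ j k
        (Complex.exp (2 * Complex.I * ((⟪η j - η k, z⟫_ℂ).re : ℂ)) • γ z) ∂μ := by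
    rw [integral_finsetSum _ fun j _ => integrable_finsetSum _ fun k _ => hI j k]
    refine Finset.sum_congr rfl fun j _ => ?_
    rw [integral_finsetSum _ fun k _ => hI j k]
    refine Finset.sum_congr rfl fun k _ => ?_
    rw [(Φ j k).integral_comp_comm (hint _), hΦ]
    rfl
  rw [key, ← ContinuousLinearMap.nonneg_iff_isPositive]
  refine integral_nonneg_of_ae ?_
  filter_upwards [hpos] with z hz
  let c : Fin J → ℂ := fun j => Complex.exp (2 * Complex.I * ((⟪η j, z⟫_ℂ).re : ℂ))
  let V : ℋ →L[ℂ] ℋ := ∑ j, c j • 𝔱 j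
  have hc : ∀ j k, Complex.exp (2 * Complex.I * ((⟪η j - η k, z⟫_ℂ).re : ℂ))
      = c j * star (c k) := by
    intro j k
    simp only [c, Complex.star_def, ← Complex.exp_conj, ← Complex.exp_add]
    congr 1
    simp only [inner_sub_left, map_mul, Complex.conj_I, Complex.conj_ofReal, Complex.sub_re,
      Complex.ofReal_sub, map_ofNat]
    ring
  have hV : (∑ j : Fin J, ∑ k : Fin J, Φ j k
        (Complex.exp (2 * Complex.I * ((⟪η j - η k, z⟫_ℂ).re : ℂ)) • γ z))
      = V * γ z * star V := by
    simp only [V, star_sum, Finset.sum_mul, Finset.mul_sum, star_smul]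
    rw [Finset.sum_comm]
    refine Finset.sum_congr rfl fun k _ => Finset.sum_congr rfl fun j _ => ?_
    rw [hΦ, hc]
    simp only [smul_mul_assoc, mul_smul_comm, smul_smul, mul_comm]
  rw [hV]
  exact star_right_conjugate_nonneg ((ContinuousLinearMap.nonneg_iff_isPositive _).2 hz) V
end
end

section
/- Let 𝔥 and ℋ be separable complex Hilbert spaces, (ε_n)_{n∈ℕ} a sequence of real numbers with ε_n → 0, and F_n, F : 𝔥 → trace-class operators on ℋ maps such that for every η ∈ 𝔥 and every compact operator 𝔨 on ℋ one has tr(F_n(η)𝔨) → tr(F(η)𝔨) as n → ∞. Assume each F_n is ε_n-twisted completely positive definite: for every finite collection η_1, …, η_J ∈ 𝔥 and 𝔱_1, …, 𝔱_J ∈ B(ℋ), the operator Σ_{j,k=1}^J 𝔱_j F_n(η_j − η_k) 𝔱_k* e^{i ε_n Im⟨η_j, η_k⟩} is positive on ℋ. Then F is completely positive definite: for every finite collection η_1, …, η_J ∈ 𝔥 and 𝔱_1, …, 𝔱_J ∈ B(ℋ), Σ_{j,k=1}^J 𝔱_j F(η_j − η_k) 𝔱_k* is a positive operator on ℋ. 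-/
noncomputable section
open MeasureTheory Complex
open scoped InnerProductSpace

variable {ℋ : Type*} [NormedAddCommGroup ℋ] [InnerProductSpace ℂ ℋ] [CompleteSpace ℋ]

/-- The trace `tr T = Σ_i ⟨e_i, T e_i⟩` computed in the Hilbert basis `e`. -/
def traceC {ι : Type*} (e : HilbertBasis ι ℂ ℋ) (T : ℋ →L[ℂ] ℋ) : ℂ :=
  ∑' i, ⟪e i, T (e i)⟫_ℂ

theorem traceC_mul_rankOne {ι : Type*} (e : HilbertBasis ι ℂ ℋ) (T : ℋ →L[ℂ] ℋ) (u v : ℋ) :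
    traceC e (T * (innerSL ℂ v).smulRight u) = ⟪v, T u⟫_ℂ := by
  unfold traceC
  rw [← e.tsum_inner_mul_inner v (T u)]
  refine tsum_congr fun i => ?_
  simp [inner_smul_right]

theorem isCompactOperator_rankOne (u v : ℋ) :
    IsCompactOperator ((innerSL ℂ v).smulRight u : ℋ →L[ℂ] ℋ) := by
  have h : IsCompactOperator (innerSL ℂ v : ℋ →L[ℂ] ℂ) :=
    ⟨(innerSL ℂ v) '' Metric.closedBall 0 1 |> closure,
      (Metric.isCompact_of_isClosed_isBounded isClosed_closure
        (((innerSL ℂ v : ℋ →L[ℂ] ℂ).lipschitz.isBounded_image Metric.isBounded_closedBall).closure)),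
      Filter.mem_of_superset (Metric.closedBall_mem_nhds 0 one_pos)
        (fun x hx => subset_closure ⟨x, hx, rfl⟩)⟩
  exact h.clm_comp ((ContinuousLinearMap.id ℂ ℂ).smulRight u)

/-- If trace-class-valued maps `F_n` converge to `F` pointwise in the weak-*
sense (tested against compact operators), `ε_n → 0`, and each `F_n` is `ε_n`-twisted completely
positive definite, then `F` is completely positive definite. -/
theorem completely_positive_definite_of_twisted_limit
    {𝔥 : Type*} [NormedAddCommGroup 𝔥] [InnerProductSpace ℂ 𝔥] [CompleteSpace 𝔥]
    [SecondCountableTopology 𝔥] [SecondCountableTopology ℋ]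
    {ι : Type*} (e : HilbertBasis ι ℂ ℋ)
    (ε : ℕ → ℝ) (hε : Filter.Tendsto ε Filter.atTop (nhds 0))
    (F : ℕ → 𝔥 → (ℋ →L[ℂ] ℋ)) (F₀ : 𝔥 → (ℋ →L[ℂ] ℋ))
    (hFtc : ∀ (n : ℕ) (η : 𝔥), IsTraceClass e (F n η))
    (hF₀tc : ∀ η : 𝔥, IsTraceClass e (F₀ η))
    (hconv : ∀ (η : 𝔥) (𝔨 : ℋ →L[ℂ] ℋ), IsCompactOperator 𝔨 →
      Filter.Tendsto (fun n => traceC e (F n η * 𝔨)) Filter.atTop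
        (nhds (traceC e (F₀ η * 𝔨))))
    (htwisted : ∀ (n : ℕ) (J : ℕ) (η : Fin J → 𝔥) (𝔱 : Fin J → (ℋ →L[ℂ] ℋ)),
      (∑ j : Fin J, ∑ k : Fin J,
        Complex.exp (Complex.I * (ε n : ℂ) * ((⟪η j, η k⟫_ℂ).im : ℂ)) •
          (𝔱 j * F n (η j - η k) * star (𝔱 k))).IsPositive) :
    ∀ (J : ℕ) (η : Fin J → 𝔥) (𝔱 : Fin J → (ℋ →L[ℂ] ℋ)),
      (∑ j : Fin J, ∑ k : Fin J,
        𝔱 j * F₀ (η j - η k) * star (𝔱 k)).IsPositive := by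
  intro J η 𝔱
  rw [ContinuousLinearMap.isPositive_iff_complex]
  intro x
  have hw : ∀ (η : 𝔥) (u v : ℋ), Filter.Tendsto (fun n => ⟪F n η u, v⟫_ℂ) Filter.atTop
      (nhds ⟪F₀ η u, v⟫_ℂ) := by
    intro η u v
    have h := hconv η _ (isCompactOperator_rankOne u v)
    simp only [traceC_mul_rankOne] at h
    have h2 := (Complex.continuous_conj.tendsto _).comp h
    simpa only [Function.comp_def, inner_conj_symm] using h2
  have hT : Filter.Tendsto (fun n => ⟪(∑ j : Fin J, ∑ k : Fin J,
        Complex.exp (Complex.I * (ε n : ℂ) * ((⟪η j, η k⟫_ℂ).im : ℂ)) •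
          (𝔱 j * F n (η j - η k) * star (𝔱 k))) x, x⟫_ℂ) Filter.atTop
      (nhds ⟪(∑ j : Fin J, ∑ k : Fin J, 𝔱 j * F₀ (η j - η k) * star (𝔱 k)) x, x⟫_ℂ) := by
    simp only [_root_.sum_apply, sum_inner, _root_.smul_apply,
      inner_smul_left]
    refine tendsto_finsetSum _ fun j _ => tendsto_finsetSum _ fun k _ => ?_
    have key : ∀ A : ℋ →L[ℂ] ℋ, ⟪(𝔱 j * A * star (𝔱 k)) x, x⟫_ℂ =
        ⟪A (star (𝔱 k) x), ContinuousLinearMap.adjoint (𝔱 j) x⟫_ℂ := by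
      intro A
      rw [ContinuousLinearMap.adjoint_inner_right]
      rfl
    simp only [key]
    have hc : Continuous fun r : ℝ => (starRingEnd ℂ)
        (Complex.exp (Complex.I * (r : ℂ) * ((⟪η j, η k⟫_ℂ).im : ℂ))) := by fun_prop
    have he := (hc.tendsto 0).comp hε
    have := he.mul (hw (η j - η k) (star (𝔱 k) x) (ContinuousLinearMap.adjoint (𝔱 j) x))
    simpa only [Function.comp_def, Complex.ofReal_zero, mul_zero, zero_mul, Complex.exp_zero,
      map_one, one_mul] using this
  have hp := fun n => (ContinuousLinearMap.isPositive_iff_complex _).1 (htwisted n J η 𝔱) x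
  have hre := (Complex.continuous_re.tendsto _).comp hT
  refine ⟨?_, ge_of_tendsto' hre fun n => (hp n).2⟩
  exact tendsto_nhds_unique
    (((Complex.continuous_ofReal.tendsto _).comp hre).congr fun n => (hp n).1) hT
end
end
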